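/- Let $S, M, B \in \mathbb{C}^{m\times m}$ be Hermitian matrices, $k_i$ real and $f_i$ complex, satisfying $S_{ij} - k_j^2 M_{ij} - \imath k_j B_{ij} = -2\imath k_j \overline{f_i}$ for all $i,j$. Then for all $i,j$ with $i \neq j$ and $k_i^2 \neq k_j^2$, $k_i \neq k_j$: $(k_i^2 - k_j^2) M_{ij} - \imath(k_i + k_j) B_{ij} = -2\imath (k_i f_j + k_j \overline{f_i})$. -/

import Mathlib

open Complex

/-!
The pencil `P(s) = S - s² M - i s B` with Hermitian coefficients satisfies `P(s)ᴴ = P(-s)` for real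
`s`: conjugation only flips the sign of `i`, which has the same effect as flipping the sign of `s`.
The data give column `j` of `P(k j)` and, after taking adjoints, row `i` of `P(-k i)`. In the
difference of the two `(i, j)` entries `S` cancels, so the data determine a combination of `M` and
`B` alone.
-/

section ImpedancePencil

variable {n R : Type*} [CommRing R]

/-- The quadratic matrix pencil `S - s² M - c s B` of an impedance scattering problem at wave number
`s`, with stiffness matrix `S`, mass matrix `M` and boundary matrix `B`. The ring element `c` plays
the role of the imaginary unit. -/
def impedancePencil (c : R) (S M B : Matrix n n R) (s : R) : Matrix n n R :=
  S - s ^ 2 • M - (c * s) • B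

theorem impedancePencil_apply (c : R) (S M B : Matrix n n R) (s : R) (i j : n) :
    impedancePencil c S M B s i j = S i j - s ^ 2 * M i j - c * s * B i j :=
  rfl

theorem impedancePencil_sub_impedancePencil_neg (c : R) (S M B : Matrix n n R) (s t : R) :
    impedancePencil c S M B t - impedancePencil c S M B (-s) =
      (s ^ 2 - t ^ 2) • M - (c * (s + t)) • B := by
  unfold impedancePencil
  module

variable [StarRing R] {c : R} {S M B : Matrix n n R}

theorem conjTranspose_impedancePencil (hc : c ∈ skewAdjoint R) (hS : S.IsHermitian)
    (hM : M.IsHermitian) (hB : B.IsHermitian) {s : R} (hs : IsSelfAdjoint s) :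
    (impedancePencil c S M B s).conjTranspose = impedancePencil c S M B (-s) := by
  simp only [impedancePencil, Matrix.conjTranspose_sub, Matrix.conjTranspose_smul, star_pow,
    star_mul', hS.eq, hM.eq, hB.eq, hs.star_eq, skewAdjoint.mem_iff.mp hc, neg_sq, neg_mul, mul_neg]

theorem stmt1_general (hc : c ∈ skewAdjoint R) (hS : S.IsHermitian) (hM : M.IsHermitian)
    (hB : B.IsHermitian) {k : n → R} (hk : ∀ i, IsSelfAdjoint (k i)) {f : n → R}
    (heq : ∀ i j, S i j - k j ^ 2 * M i j - c * k j * B i j = -2 * c * k j * star (f i))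
    (i j : n) :
    (k i ^ 2 - k j ^ 2) * M i j - c * (k i + k j) * B i j =
      -2 * c * (k i * f j + k j * star (f i)) := by
  have hcol : impedancePencil c S M B (k j) i j = -2 * c * k j * star (f i) := heq i j
  have hrow : impedancePencil c S M B (-k i) i j = 2 * c * k i * f j := by
    rw [← conjTranspose_impedancePencil hc hS hM hB (hk i), Matrix.conjTranspose_apply,
      impedancePencil_apply, heq j i]
    simp only [star_mul', star_neg, star_ofNat, star_star, (hk i).star_eq,
      skewAdjoint.mem_iff.mp hc, neg_mul, mul_neg, neg_neg]
  calc (k i ^ 2 - k j ^ 2) * M i j - c * (k i + k j) * B i j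
      = impedancePencil c S M B (k j) i j - impedancePencil c S M B (-k i) i j :=
        (congr_fun₂ (impedancePencil_sub_impedancePencil_neg c S M B (k i) (k j)) i j).symm
    _ = -2 * c * (k i * f j + k j * star (f i)) := by rw [hcol, hrow]; ring

end ImpedancePencil

theorem stmt1 {m : ℕ} (S M B : Matrix (Fin m) (Fin m) ℂ)
    (hS : S.IsHermitian) (hM : M.IsHermitian) (hB : B.IsHermitian)
    (k : Fin m → ℝ) (f : Fin m → ℂ)
    (heq : ∀ i j, S i j - (k j : ℂ)^2 * M i j - I * (k j : ℂ) * B i j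
      = -2 * I * (k j : ℂ) * (starRingEnd ℂ) (f i)) :
    ∀ i j, i ≠ j → (k i)^2 ≠ (k j)^2 → k i ≠ k j →
      ((k i : ℂ)^2 - (k j : ℂ)^2) * M i j - I * ((k i : ℂ) + (k j : ℂ)) * B i j
        = -2 * I * ((k i : ℂ) * f j + (k j : ℂ) * (starRingEnd ℂ) (f i)) := by
  intro i j _ _ _
  exact stmt1_general (skewAdjoint.mem_iff.mpr conj_I) hS hM hB (fun i ↦ conj_ofReal (k i)) heq i j
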